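/- arXiv:2204.03422 — 2 statements merged into one kernel-verified Lean document; each statement's English description precedes it below -/
import Mathlib

section
/- Let (u,v) be as in the context and let B = B_d(z) be an open ball whose closure is contained in Ω. Then for every y ∈ ℝ²: (2/(p+1)) ∫_B v^{p+1} dx + (2/(q+1)) ∫_B u^{q+1} dx = ∫_{∂B} [⟨∇u(x),ν(x)⟩⟨∇v(x),x−y⟩ + ⟨∇v(x),ν(x)⟩⟨∇u(x),x−y⟩] dσ(x) − ∫_{∂B} ⟨∇u(x),∇v(x)⟩⟨x−y,ν(x)⟩ dσ(x) + ∫_{∂B} ⟨x−y,ν(x)⟩ (v(x)^{p+1}/(p+1) + u(x)^{q+1}/(q+1)) dσ(x). -/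
open MeasureTheory Filter Metric Real
open scoped Topology ENNReal NNReal RealInnerProductSpace

noncomputable section

/-- The plane `ℝ²`. -/
abbrev E2 : Type := EuclideanSpace ℝ (Fin 2)

/-- The Laplacian of `f : ℝ² → ℝ`, as the sum of the second partial derivatives. -/
def plap (f : E2 → ℝ) (x : E2) : ℝ :=
  ∑ i : Fin 2, fderiv ℝ (fun y => fderiv ℝ f y (EuclideanSpace.single i 1)) x
    (EuclideanSpace.single i 1)

/-- The sup of `|f|` over a set `s`. -/
def supOn (s : Set E2) (f : E2 → ℝ) : ℝ := sSup ((fun x => |f x|) '' s)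

/-- polar parametrization around `z`. -/
def pol (z : E2) (r θ : ℝ) : E2 :=
  z + r • (cos θ • EuclideanSpace.single (0 : Fin 2) (1 : ℝ) + sin θ • EuclideanSpace.single (1 : Fin 2) (1 : ℝ))

lemma pol_zero (z : E2) (r θ : ℝ) : pol z r θ 0 = z 0 + r * cos θ := by
  simp [pol]

lemma pol_one (z : E2) (r θ : ℝ) : pol z r θ 1 = z 1 + r * sin θ := by
  simp [pol]

lemma pol_cont (z : E2) : Continuous (fun a : ℝ × ℝ => pol z a.1 a.2) := by
  unfold pol; fun_prop

lemma dist_pol_center (z : E2) (r θ : ℝ) : dist (pol z r θ) z = |r| := by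
  rw [EuclideanSpace.dist_eq]
  simp only [Fin.sum_univ_two, pol_zero, pol_one, Real.dist_eq, sq_abs]
  rw [← Real.sqrt_sq_eq_abs]
  congr 1
  nlinarith [sin_sq_add_cos_sq θ]

lemma dist_pol (z : E2) (d s t : ℝ) (hd : 0 < d) :
    dist (pol z d s) (pol z d t) = d * (2 * |sin ((s - t) / 2)|) := by
  rw [EuclideanSpace.dist_eq]
  simp only [Fin.sum_univ_two, pol_zero, pol_one, Real.dist_eq, sq_abs]
  have h : (z 0 + d * cos s - (z 0 + d * cos t)) ^ 2 + (z 1 + d * sin s - (z 1 + d * sin t)) ^ 2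
      = (d * (2 * sin ((s - t) / 2))) ^ 2 := by
    have h1 := Real.cos_sub_cos s t
    have h2 := Real.sin_sub_sin s t
    have h3 := sin_sq_add_cos_sq ((s + t) / 2)
    have : (z 0 + d * cos s - (z 0 + d * cos t)) ^ 2 + (z 1 + d * sin s - (z 1 + d * sin t)) ^ 2
      = d ^ 2 * ((cos s - cos t) ^ 2 + (sin s - sin t) ^ 2) := by ring
    rw [this, h1, h2]
    linear_combination (4 * d ^ 2 * sin ((s - t) / 2) ^ 2) * h3
  rw [h, Real.sqrt_sq_eq_abs, abs_mul, abs_mul, abs_of_pos hd, abs_two]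

lemma pol_lip (z : E2) (d : ℝ) (hd : 0 < d) : LipschitzWith d.toNNReal (pol z d) := by
  apply LipschitzWith.of_dist_le_mul
  intro s t
  rw [dist_pol z d s t hd, Real.coe_toNNReal _ hd.le, Real.dist_eq]
  have := Real.abs_sin_le_abs (x := (s - t) / 2)
  rw [abs_div, abs_two] at this
  gcongr
  linarith

lemma pol_antilip (z : E2) (d δ s t : ℝ) (hd : 0 < d) (hδ : 0 < δ) (hδ1 : δ < 1)
    (hst : |s - t| ≤ δ) : d * (1 - δ) * |s - t| ≤ dist (pol z d s) (pol z d t) := by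
  rw [dist_pol z d s t hd, mul_assoc]
  refine mul_le_mul_of_nonneg_left ?_ hd.le
  have key : ∀ x : ℝ, 0 < x → x ≤ δ → (1 - δ) * x ≤ 2 * |sin (x / 2)| := by
    intro x hx hxd
    have h1 := Real.sin_gt_sub_cube (x := x / 2) (by positivity)
    have h2 : x ^ 2 ≤ δ := by nlinarith
    have h3 : x ^ 3 ≤ δ * x := by nlinarith
    have := le_abs_self (sin (x / 2))
    nlinarith
  rcases lt_trichotomy (s - t) 0 with h | h | h
  · have := key (t - s) (by linarith) (by rw [abs_of_neg h] at hst; linarith)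
    rw [abs_of_neg h]
    rw [show (s - t) / 2 = -((t - s) / 2) by ring, sin_neg, abs_neg]
    linarith
  · simp [h]
  · rw [abs_of_pos h] at hst ⊢
    exact key _ h hst

lemma pol_injOn (z : E2) (d : ℝ) (hd : 0 < d) : Set.InjOn (pol z d) (Set.Ioc (-π) π) := by
  intro s hs t ht h
  have h0 : dist (pol z d s) (pol z d t) = 0 := by rw [h, dist_self]
  rw [dist_pol z d s t hd] at h0
  have h1 : sin ((s - t) / 2) = 0 := by
    have : d ≠ 0 := hd.ne'
    simpa [this] using h0
  have := (Real.sin_eq_zero_iff_of_lt_of_lt (x := (s - t) / 2) (by linarith [hs.1, ht.2])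
    (by linarith [hs.2, ht.1])).1 h1
  linarith

lemma pol_sphere_surj (z : E2) (d : ℝ) (hd : 0 < d) (x : E2) (hx : x ∈ sphere z d) :
    ∃ θ ∈ Set.Ioc (-π) π, pol z d θ = x := by
  have hx' : (x 0 - z 0) ^ 2 + (x 1 - z 1) ^ 2 = d ^ 2 := by
    rw [mem_sphere, EuclideanSpace.dist_eq] at hx
    simp only [Fin.sum_univ_two, Real.dist_eq, sq_abs] at hx
    rw [← hx, Real.sq_sqrt (by positivity)]
  set w : ℂ := ⟨x 0 - z 0, x 1 - z 1⟩ with hw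
  have hn : ‖w‖ = d := by
    rw [Complex.norm_def, Complex.normSq_apply, ← sq, ← sq, hx', Real.sqrt_sq hd.le]
  refine ⟨w.arg, Complex.arg_mem_Ioc w, ?_⟩
  have h1 := Complex.norm_mul_cos_arg w
  have h2 := Complex.norm_mul_sin_arg w
  rw [hn] at h1 h2
  ext i
  fin_cases i
  · simp only [Fin.zero_eta, pol_zero, h1]; simp [hw]
  · simp only [Fin.mk_one, pol_one, h2]; simp [hw]

lemma piece_le (z : E2) (d δ : ℝ) (hd : 0 < d) (hδ : 0 < δ) (hδ1 : δ < 1) (A : Set ℝ)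
    (hA : ∀ s ∈ A, ∀ t ∈ A, |s - t| ≤ δ) :
    ENNReal.ofReal (d * (1 - δ)) * volume A ≤ μH[1] (pol z d '' A) := by
  have hc : 0 < d * (1 - δ) := mul_pos hd (by linarith)
  have hinj : Set.InjOn (pol z d) A := by
    intro s hs t ht h
    have := pol_antilip z d δ s t hd hδ hδ1 (hA s hs t ht)
    rw [h, dist_self] at this
    have : |s - t| ≤ 0 := by
      by_contra hh
      push Not at hh
      nlinarith
    have := abs_nonpos_iff.1 this
    linarith
  set g := Function.invFunOn (pol z d) A with hg
  have hgl : ∀ s ∈ A, g (pol z d s) = s := fun s hs => hinj.leftInvOn_invFunOn hs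
  have hL : LipschitzOnWith (d * (1 - δ))⁻¹.toNNReal g (pol z d '' A) := by
    apply LipschitzOnWith.of_dist_le_mul
    rintro _ ⟨s, hs, rfl⟩ _ ⟨t, ht, rfl⟩
    rw [hgl s hs, hgl t ht, Real.coe_toNNReal _ (inv_pos.2 hc).le, Real.dist_eq,
      ← div_eq_inv_mul, le_div_iff₀' hc]
    exact pol_antilip z d δ s t hd hδ hδ1 (hA s hs t ht)
  have h1 := hL.hausdorffMeasure_image_le (d := 1) zero_le_one
  have him : g '' (pol z d '' A) = A := by
    rw [Set.image_image]
    ext s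
    constructor
    · rintro ⟨t, ht, rfl⟩; simpa [hgl t ht] using ht
    · intro hs; exact ⟨s, hs, hgl s hs⟩
  rw [him, MeasureTheory.hausdorffMeasure_real, ENNReal.rpow_one] at h1
  calc ENNReal.ofReal (d * (1 - δ)) * volume A
      ≤ ENNReal.ofReal (d * (1 - δ)) * (((d * (1 - δ))⁻¹.toNNReal : ℝ≥0∞) * μH[1] (pol z d '' A)) := by
        gcongr
    _ = μH[1] (pol z d '' A) := by
        rw [← mul_assoc]
        change ENNReal.ofReal (d * (1 - δ)) * ENNReal.ofReal ((d * (1 - δ))⁻¹) * _ = _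
        rw [← ENNReal.ofReal_mul hc.le, mul_inv_cancel₀ hc.ne']
        simp

lemma arc_le (z : E2) (d δ : ℝ) (hd : 0 < d) (hδ : 0 < δ) (hδ1 : δ < 1) (A : Set ℝ)
    (hA : MeasurableSet A) (hAI : A ⊆ Set.Ioc (-π) π) :
    ENNReal.ofReal (d * (1 - δ)) * volume A ≤ μH[1] (pol z d '' A) := by
  set I : ℤ → Set ℝ := fun k => Set.Ioc (k • δ) ((k + 1) • δ) with hI
  have hU : A = ⋃ k, A ∩ I k := by
    rw [← Set.inter_iUnion, hI, iUnion_Ioc_zsmul hδ, Set.inter_univ]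
  have hdis : Pairwise (Function.onFun Disjoint (fun k => A ∩ I k)) := fun i j hij =>
    ((Set.pairwise_disjoint_Ioc_zsmul δ) hij).mono Set.inter_subset_right Set.inter_subset_right
  have hm : ∀ k, MeasurableSet (A ∩ I k) := fun k => hA.inter measurableSet_Ioc
  have hinj := (pol_injOn z d hd).mono hAI
  have hv : volume A = ∑' k, volume (A ∩ I k) := by
    conv_lhs => rw [hU]
    exact measure_iUnion hdis hm
  have hh : μH[1] (pol z d '' A) = ∑' k, μH[1] (pol z d '' (A ∩ I k)) := by
    conv_lhs => rw [hU, Set.image_iUnion]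
    apply measure_iUnion
    · intro i j hij
      refine Set.disjoint_left.2 ?_
      rintro _ ⟨s, hs, rfl⟩ ⟨t, ht, hst⟩
      have := hinj ht.1 hs.1 hst
      subst this
      exact Set.disjoint_left.1 (hdis hij) hs ht
    · intro k
      exact (hm k).image_of_continuousOn_injOn (pol_lip z d hd).continuous.continuousOn
        (hinj.mono Set.inter_subset_left)
  rw [hv, hh, ← ENNReal.tsum_mul_left]
  apply ENNReal.tsum_le_tsum
  intro k
  apply piece_le z d δ hd hδ hδ1
  rintro s ⟨_, hs⟩ t ⟨_, ht⟩
  simp only [hI, Set.mem_Ioc, zsmul_eq_mul] at hs ht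
  push_cast at hs ht
  rw [abs_le]
  constructor <;> nlinarith [hs.1, hs.2, ht.1, ht.2]

lemma arc_eq (z : E2) (d : ℝ) (hd : 0 < d) (A : Set ℝ)
    (hA : MeasurableSet A) (hAI : A ⊆ Set.Ioc (-π) π) :
    μH[1] (pol z d '' A) = ENNReal.ofReal d * volume A := by
  apply le_antisymm
  · have := (pol_lip z d hd).hausdorffMeasure_image_le (d := 1) zero_le_one A
    rwa [MeasureTheory.hausdorffMeasure_real, ENNReal.rpow_one] at this
  · have hfin : volume A ≠ ⊤ := by
      refine ne_top_of_le_ne_top ?_ (measure_mono hAI)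
      simp
    have ht : Tendsto (fun δ : ℝ => ENNReal.ofReal (d * (1 - δ)) * volume A) (𝓝[>] 0)
        (𝓝 (ENNReal.ofReal d * volume A)) := by
      apply ENNReal.Tendsto.mul_const _ (Or.inr hfin)
      apply ENNReal.tendsto_ofReal
      have : Continuous (fun δ : ℝ => d * (1 - δ)) := by fun_prop
      have := this.tendsto 0
      simp only [sub_zero, mul_one] at this
      exact this.mono_left nhdsWithin_le_nhds
    apply le_of_tendsto ht
    have : Set.Ioo (0 : ℝ) 1 ∈ 𝓝[>] (0 : ℝ) := Ioo_mem_nhdsGT one_pos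
    filter_upwards [this] with δ hδ
    exact arc_le z d δ hd hδ.1 hδ.2 A hA hAI

lemma sphere_measure (z : E2) (d : ℝ) (hd : 0 < d) :
    (μH[1] : Measure E2).restrict (sphere z d) =
      ENNReal.ofReal d • Measure.map (pol z d) (volume.restrict (Set.Ioc (-π) π)) := by
  have hmeas : Measurable (pol z d) := (pol_lip z d hd).continuous.measurable
  ext S hS
  rw [Measure.restrict_apply hS, Measure.smul_apply, Measure.map_apply hmeas hS,
    Measure.restrict_apply (hmeas hS), smul_eq_mul,
    ← arc_eq z d hd _ ((hmeas hS).inter measurableSet_Ioc) Set.inter_subset_right]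
  congr 1
  ext x
  constructor
  · rintro ⟨hxS, hx⟩
    obtain ⟨θ, hθ, rfl⟩ := pol_sphere_surj z d hd x hx
    exact ⟨θ, ⟨hxS, hθ⟩, rfl⟩
  · rintro ⟨θ, ⟨h1, _⟩, rfl⟩
    refine ⟨h1, ?_⟩
    rw [mem_sphere, dist_pol_center, abs_of_pos hd]

lemma sphere_integrable (z : E2) (d : ℝ) (hd : 0 < d) (g : E2 → ℝ)
    (hg : ContinuousOn g (sphere z d)) : IntegrableOn g (sphere z d) μH[1] := by
  apply hg.integrableOn_of_subset_isCompact (isCompact_sphere z d) isClosed_sphere.measurableSet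
    subset_rfl
  rw [← Measure.restrict_apply_univ, sphere_measure z d hd]
  rw [Measure.smul_apply, Measure.map_apply (pol_lip z d hd).continuous.measurable MeasurableSet.univ]
  simp [ENNReal.mul_eq_top]

lemma sphere_integral (z : E2) (d : ℝ) (hd : 0 < d) (g : E2 → ℝ)
    (hg : ContinuousOn g (sphere z d)) :
    ∫ x in sphere z d, g x ∂μH[1] = ∫ θ in (-π)..π, d * g (pol z d θ) := by
  have hm : AEStronglyMeasurable g ((μH[1] : Measure E2).restrict (sphere z d)) :=
    hg.aestronglyMeasurable isClosed_sphere.measurableSet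
  have hd0 : ENNReal.ofReal d ≠ 0 := by simpa using hd
  rw [sphere_measure z d hd] at hm ⊢
  rw [integral_smul_measure, integral_map (pol_lip z d hd).continuous.measurable.aemeasurable,
    intervalIntegral.integral_of_le (by linarith [pi_pos]), integral_const_mul,
    ENNReal.toReal_ofReal hd.le, smul_eq_mul]
  exact hm.mono_ac (Measure.absolutelyContinuous_smul hd0)

lemma ball_integral (z : E2) (d : ℝ) (hd : 0 < d) (G : E2 → ℝ) :
    ∫ x in ball z d, G x = ∫ a in Set.Icc ((0 : ℝ), -π) (d, π), a.1 * G (pol z a.1 a.2) := by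
  rw [← integral_indicator measurableSet_ball]
  set H := (ball z d).indicator G with hH
  have h1 : ∫ x, H x = ∫ x, H (z + x) := (integral_add_left_eq_self H z).symm
  have h2 : ∫ x, H (z + x) = ∫ a : ℝ × ℝ, H (z + (a.1 • EuclideanSpace.single (0 : Fin 2) (1 : ℝ)
      + a.2 • EuclideanSpace.single (1 : Fin 2) (1 : ℝ))) := by
    have e := (EuclideanSpace.volume_preserving_symm_measurableEquiv_toLp (Fin 2)).trans
      (volume_preserving_finTwoArrow ℝ)
    rw [← e.integral_comp ((MeasurableEquiv.toLp 2 (Fin 2 → ℝ)).symm.trans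
      (MeasurableEquiv.finTwoArrow)).measurableEmbedding]
    congr 1
    ext x
    congr 2
    ext i
    fin_cases i <;> simp [MeasurableEquiv.finTwoArrow]
  rw [h1, h2, ← integral_comp_polarCoord_symm]
  have h3 : ∀ a ∈ polarCoord.target, a.1 • H (z + ((polarCoord.symm a).1 • EuclideanSpace.single (0 : Fin 2) (1 : ℝ)
      + (polarCoord.symm a).2 • EuclideanSpace.single (1 : Fin 2) (1 : ℝ)))
      = (Set.Ioo (0 : ℝ) d ×ˢ Set.Ioo (-π) π).indicator (fun a => a.1 * G (pol z a.1 a.2)) a := by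
    rintro ⟨r, θ⟩ ⟨hr, hθ⟩
    have hr' : 0 < r := hr
    have : z + ((polarCoord.symm (r, θ)).1 • EuclideanSpace.single (0 : Fin 2) (1 : ℝ)
      + (polarCoord.symm (r, θ)).2 • EuclideanSpace.single (1 : Fin 2) (1 : ℝ)) = pol z r θ := by
      simp [polarCoord, pol, mul_smul]
    rw [this]
    have hb : pol z r θ ∈ ball z d ↔ r < d := by
      rw [mem_ball, dist_pol_center, abs_of_pos hr']
    by_cases hrd : r < d
    · rw [hH, Set.indicator_of_mem (hb.2 hrd), Set.indicator_of_mem (s := Set.Ioo (0 : ℝ) d ×ˢ Set.Ioo (-π) π)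
        (Set.mk_mem_prod ⟨hr', hrd⟩ hθ), smul_eq_mul]
    · rw [hH, Set.indicator_of_notMem (fun h => hrd (hb.1 h)), Set.indicator_of_notMem
        (fun h => hrd h.1.2), smul_zero]
  rw [setIntegral_congr_fun polarCoord.open_target.measurableSet h3,
    setIntegral_indicator (measurableSet_Ioo.prod measurableSet_Ioo)]
  have h4 : polarCoord.target ∩ Set.Ioo (0 : ℝ) d ×ˢ Set.Ioo (-π) π = Set.Ioo (0 : ℝ) d ×ˢ Set.Ioo (-π) π := by
    apply Set.inter_eq_right.2
    rintro ⟨r, θ⟩ ⟨hr, hθ⟩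
    exact ⟨hr.1, hθ⟩
  rw [h4, ← Set.Icc_prod_Icc]
  apply setIntegral_congr_set
  exact Measure.set_prod_ae_eq Ioo_ae_eq_Icc Ioo_ae_eq_Icc

/-- derivative of the polar parametrization. -/
def polD (r θ : ℝ) : ℝ × ℝ →L[ℝ] E2 :=
  r • ((ContinuousLinearMap.snd ℝ ℝ ℝ).smulRight
      (-sin θ • EuclideanSpace.single (0 : Fin 2) (1 : ℝ) + cos θ • EuclideanSpace.single (1 : Fin 2) (1 : ℝ)))
    + (ContinuousLinearMap.fst ℝ ℝ ℝ).smulRight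
      (cos θ • EuclideanSpace.single (0 : Fin 2) (1 : ℝ) + sin θ • EuclideanSpace.single (1 : Fin 2) (1 : ℝ))

lemma hasFDerivAt_cos' (a : ℝ × ℝ) : HasFDerivAt (fun a : ℝ × ℝ => cos a.2)
    (-sin a.2 • ContinuousLinearMap.snd ℝ ℝ ℝ) a :=
  (Real.hasDerivAt_cos a.2).comp_hasFDerivAt a hasFDerivAt_snd

lemma hasFDerivAt_sin' (a : ℝ × ℝ) : HasFDerivAt (fun a : ℝ × ℝ => sin a.2)
    (cos a.2 • ContinuousLinearMap.snd ℝ ℝ ℝ) a :=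
  (Real.hasDerivAt_sin a.2).comp_hasFDerivAt a hasFDerivAt_snd

lemma pol_hasFDerivAt (z : E2) (a : ℝ × ℝ) :
    HasFDerivAt (fun a : ℝ × ℝ => pol z a.1 a.2) (polD a.1 a.2) a := by
  have h1 := ((hasFDerivAt_cos' a).smul_const (EuclideanSpace.single (0 : Fin 2) (1 : ℝ))).add
    ((hasFDerivAt_sin' a).smul_const (EuclideanSpace.single (1 : Fin 2) (1 : ℝ)))
  have h2 := (((hasFDerivAt_fst (𝕜 := ℝ) (p := a)).smul h1).const_add z)
  refine h2.congr_fderiv ?_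
  ext <;> simp [polD]

lemma clm_split (L : E2 →L[ℝ] ℝ) (a b : ℝ) : L (a • EuclideanSpace.single (0 : Fin 2) (1 : ℝ)
    + b • EuclideanSpace.single (1 : Fin 2) (1 : ℝ)) =
    a * L (EuclideanSpace.single (0 : Fin 2) (1 : ℝ)) + b * L (EuclideanSpace.single (1 : Fin 2) (1 : ℝ)) := by
  simp

theorem divergence_ball (Ω : Set E2) (hΩ : IsOpen Ω) (z : E2) (d : ℝ) (hd : 0 < d)
    (hB : closedBall z d ⊆ Ω) (F0 F1 : E2 → ℝ)
    (h0 : ContDiffOn ℝ 1 F0 Ω) (h1 : ContDiffOn ℝ 1 F1 Ω) :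
    ∫ x in ball z d, (fderiv ℝ F0 x (EuclideanSpace.single (0 : Fin 2) (1 : ℝ)) +
        fderiv ℝ F1 x (EuclideanSpace.single (1 : Fin 2) (1 : ℝ))) =
      ∫ x in sphere z d, d⁻¹ * (F0 x * (x 0 - z 0) + F1 x * (x 1 - z 1)) ∂μH[1] := by
  have hs : sphere z d ⊆ Ω := sphere_subset_closedBall.trans hB
  have hx0 : Continuous (fun x : E2 => x 0) := by fun_prop
  have hx1 : Continuous (fun x : E2 => x 1) := by fun_prop
  rw [ball_integral z d hd, sphere_integral z d hd]
  swap
  · have a0 := h0.continuousOn.mono hs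
    have a1 := h1.continuousOn.mono hs
    fun_prop
  set P : ℝ × ℝ → E2 := fun a => pol z a.1 a.2 with hP
  set f : ℝ × ℝ → ℝ := fun a => a.1 * (F0 (P a) * cos a.2 + F1 (P a) * sin a.2) with hf
  set g : ℝ × ℝ → ℝ := fun a => F1 (P a) * cos a.2 - F0 (P a) * sin a.2 with hg
  have hPc : Continuous P := pol_cont z
  have hmap : Set.MapsTo P (Set.Icc ((0 : ℝ), -π) (d, π)) Ω := by
    intro a ha
    apply hB
    rw [mem_closedBall, hP, dist_pol_center, abs_of_nonneg ha.1.1]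
    exact ha.2.1
  have hF0 := h0.continuousOn.comp hPc.continuousOn hmap
  have hF1 := h1.continuousOn.comp hPc.continuousOn hmap
  have hD0 := (h0.continuousOn_fderiv_of_isOpen hΩ le_rfl).comp hPc.continuousOn hmap
  have hD1 := (h1.continuousOn_fderiv_of_isOpen hΩ le_rfl).comp hPc.continuousOn hmap
  have hd0 : ∀ a, P a ∈ Ω → HasFDerivAt (fun a => F0 (P a)) ((fderiv ℝ F0 (P a)).comp (polD a.1 a.2)) a := by
    intro a ha
    exact (((h0.contDiffAt (hΩ.mem_nhds ha)).differentiableAt one_ne_zero).hasFDerivAt).comp a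
      (pol_hasFDerivAt z a)
  have hd1 : ∀ a, P a ∈ Ω → HasFDerivAt (fun a => F1 (P a)) ((fderiv ℝ F1 (P a)).comp (polD a.1 a.2)) a := by
    intro a ha
    exact (((h1.contDiffAt (hΩ.mem_nhds ha)).differentiableAt one_ne_zero).hasFDerivAt).comp a
      (pol_hasFDerivAt z a)
  have hdf : ∀ a, P a ∈ Ω → HasFDerivAt f _ a := fun a ha =>
    (hasFDerivAt_fst (𝕜 := ℝ) (p := a)).mul (((hd0 a ha).mul (hasFDerivAt_cos' a)).add
      ((hd1 a ha).mul (hasFDerivAt_sin' a)))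
  have hdg : ∀ a, P a ∈ Ω → HasFDerivAt g _ a := fun a ha =>
    ((hd1 a ha).mul (hasFDerivAt_cos' a)).sub ((hd0 a ha).mul (hasFDerivAt_sin' a))
  have hdiv : ∀ a, P a ∈ Ω → fderiv ℝ f a (1, 0) + fderiv ℝ g a (0, 1) =
      a.1 * (fderiv ℝ F0 (P a) (EuclideanSpace.single (0 : Fin 2) (1 : ℝ)) +
        fderiv ℝ F1 (P a) (EuclideanSpace.single (1 : Fin 2) (1 : ℝ))) := by
    intro a ha
    rw [(hdf a ha).fderiv, (hdg a ha).fderiv]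
    have e1 : polD a.1 a.2 (1, 0) = cos a.2 • EuclideanSpace.single (0 : Fin 2) (1 : ℝ) + sin a.2 • EuclideanSpace.single (1 : Fin 2) (1 : ℝ) := by
      simp [polD]
    have e2 : polD a.1 a.2 (0, 1) = (a.1 * -sin a.2) • EuclideanSpace.single (0 : Fin 2) (1 : ℝ) + (a.1 * cos a.2) • EuclideanSpace.single (1 : Fin 2) (1 : ℝ) := by
      simp [polD, mul_smul]
    simp only [_root_.add_apply, _root_.sub_apply,
      _root_.smul_apply, ContinuousLinearMap.comp_apply, e1, e2, clm_split,
      ContinuousLinearMap.coe_fst', ContinuousLinearMap.coe_snd', smul_eq_mul]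
    linear_combination (a.1 * (fderiv ℝ F0 (P a) (EuclideanSpace.single (0 : Fin 2) (1 : ℝ)) +
        fderiv ℝ F1 (P a) (EuclideanSpace.single (1 : Fin 2) (1 : ℝ)))) * sin_sq_add_cos_sq a.2
  have hle : ((0 : ℝ), -π) ≤ (d, π) := ⟨hd.le, by simp; linarith [pi_pos]⟩
  have hint : ContinuousOn (fun a : ℝ × ℝ => fderiv ℝ f a (1, 0) + fderiv ℝ g a (0, 1)) (Set.Icc ((0 : ℝ), -π) (d, π)) := by
    have : ContinuousOn (fun a : ℝ × ℝ => a.1 * (fderiv ℝ F0 (P a) (EuclideanSpace.single (0 : Fin 2) (1 : ℝ)) +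
        fderiv ℝ F1 (P a) (EuclideanSpace.single (1 : Fin 2) (1 : ℝ)))) (Set.Icc ((0 : ℝ), -π) (d, π)) :=
      continuous_fst.continuousOn.mul ((hD0.clm_apply continuousOn_const).add
        (hD1.clm_apply continuousOn_const))
    exact this.congr (fun a ha => hdiv a (hmap ha))
  have hsub : Set.Ioo ((0 : ℝ), -π).1 (d, π).1 ×ˢ Set.Ioo ((0 : ℝ), -π).2 (d, π).2 ⊆ Set.Icc ((0 : ℝ), -π) (d, π) := by
    rintro ⟨r, θ⟩ ⟨hr, hθ⟩
    exact ⟨⟨hr.1.le, hθ.1.le⟩, ⟨hr.2.le, hθ.2.le⟩⟩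
  have key := integral_divergence_prod_Icc_of_hasFDerivAt_of_le f g (fderiv ℝ f) (fderiv ℝ g)
    ((0 : ℝ), -π) (d, π) hle
    (continuous_fst.continuousOn.mul ((hF0.mul (by fun_prop)).add (hF1.mul (by fun_prop))))
    ((hF1.mul (by fun_prop)).sub (hF0.mul (by fun_prop)))
    (fun a ha => (hdf a (hmap (hsub ha))).differentiableAt.hasFDerivAt)
    (fun a ha => (hdg a (hmap (hsub ha))).differentiableAt.hasFDerivAt)
    (hint.integrableOn_compact isCompact_Icc)
  rw [setIntegral_congr_fun measurableSet_Icc (fun a ha => hdiv a (hmap ha))] at key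
  rw [key]
  have hper : ∀ r, g (r, π) = g (r, -π) := by
    intro r
    simp [hg, hP, pol]
  have hz : ∀ θ, f (0, θ) = 0 := by intro θ; simp [hf]
  simp only [hper, hz, intervalIntegral.integral_zero, sub_self, zero_add, sub_zero]
  apply intervalIntegral.integral_congr
  intro θ _
  simp only [hf, hP, pol_zero, pol_one]
  field_simp
  ring

/-- partial derivative. -/
def pd (i : Fin 2) (f : E2 → ℝ) (x : E2) : ℝ := fderiv ℝ f x (EuclideanSpace.single i 1)

lemma inner_grad (f : E2 → ℝ) (x w : E2) :
    ⟪gradient f x, w⟫ = w 0 * pd 0 f x + w 1 * pd 1 f x := by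
  have h : ⟪gradient f x, w⟫ = fderiv ℝ f x w := by
    simp [gradient]
  have hw : w = w 0 • EuclideanSpace.single (0 : Fin 2) (1 : ℝ)
      + w 1 • EuclideanSpace.single (1 : Fin 2) (1 : ℝ) := by
    ext i; fin_cases i <;> simp
  rw [h]
  conv_lhs => rw [hw, clm_split]
  rfl

lemma grad_coord (f : E2 → ℝ) (x : E2) (i : Fin 2) : gradient f x i = pd i f x := by
  have h : ⟪gradient f x, EuclideanSpace.single i (1 : ℝ)⟫ = pd i f x := by
    simp [gradient, pd]
  rw [← h, EuclideanSpace.inner_single_right]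
  simp

lemma inner_E2 (a b : E2) : ⟪a, b⟫ = a 0 * b 0 + a 1 * b 1 := by
  rw [PiLp.inner_apply, Fin.sum_univ_two]
  simp [mul_comm]

lemma pd_contDiffOn (Ω : Set E2) (hΩ : IsOpen Ω) (f : E2 → ℝ) (hf : ContDiffOn ℝ 2 f Ω)
    (i : Fin 2) : ContDiffOn ℝ 1 (pd i f) Ω := by
  have := hf.fderiv_of_isOpen hΩ (m := 1) (by norm_num)
  exact this.clm_apply contDiffOn_const

lemma pd_symm (Ω : Set E2) (hΩ : IsOpen Ω) (f : E2 → ℝ) (hf : ContDiffOn ℝ 2 f Ω)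
    (x : E2) (hx : x ∈ Ω) : pd 0 (pd 1 f) x = pd 1 (pd 0 f) x := by
  have hc := hf.contDiffAt (hΩ.mem_nhds hx)
  have hs := hc.isSymmSndFDerivAt (by simp)
  have hd : DifferentiableAt ℝ (fderiv ℝ f) x :=
    (hc.fderiv_right (m := 1) (by norm_num)).differentiableAt one_ne_zero
  have e : ∀ i j : Fin 2, pd i (pd j f) x = fderiv ℝ (fderiv ℝ f) x (EuclideanSpace.single i 1)
      (EuclideanSpace.single j 1) := by
    intro i j
    unfold pd
    rw [fderiv_clm_apply hd (differentiableAt_const _)]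
    simp
  rw [e, e, hs.eq]

/-- Component `i` of the Pohozaev field. -/
def poh (p q : ℝ) (u v : E2 → ℝ) (y : E2) (i : Fin 2) (x : E2) : ℝ :=
  pd i u x * (pd 0 v x * (x 0 - y 0) + pd 1 v x * (x 1 - y 1)) +
  pd i v x * (pd 0 u x * (x 0 - y 0) + pd 1 u x * (x 1 - y 1)) -
  (pd 0 u x * pd 0 v x + pd 1 u x * pd 1 v x) * (x i - y i) +
  (x i - y i) * (v x ^ (p + 1) / (p + 1) + u x ^ (q + 1) / (q + 1))

lemma pd_add {f g : E2 → ℝ} {x : E2} {i : Fin 2} (hf : DifferentiableAt ℝ f x)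
    (hg : DifferentiableAt ℝ g x) : pd i (fun x => f x + g x) x = pd i f x + pd i g x := by
  unfold pd; rw [fderiv_fun_add hf hg]; rfl

lemma pd_sub {f g : E2 → ℝ} {x : E2} {i : Fin 2} (hf : DifferentiableAt ℝ f x)
    (hg : DifferentiableAt ℝ g x) : pd i (fun x => f x - g x) x = pd i f x - pd i g x := by
  unfold pd; rw [fderiv_fun_sub hf hg]; rfl

lemma pd_mul {f g : E2 → ℝ} {x : E2} {i : Fin 2} (hf : DifferentiableAt ℝ f x)
    (hg : DifferentiableAt ℝ g x) :
    pd i (fun x => f x * g x) x = f x * pd i g x + g x * pd i f x := by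
  unfold pd; rw [fderiv_fun_mul hf hg]; rfl

lemma pd_pow {f : E2 → ℝ} {x : E2} {i : Fin 2} (s : ℝ) (hs : 0 < s) (hf : DifferentiableAt ℝ f x)
    (h0 : 0 < f x) :
    pd i (fun x => f x ^ (s + 1) / (s + 1)) x = f x ^ s * pd i f x := by
  unfold pd
  have h := (hf.hasFDerivAt.rpow_const (p := s + 1) (Or.inl h0.ne')).mul_const (s + 1)⁻¹
  simp only [← div_eq_mul_inv] at h
  rw [h.fderiv]
  have : s + 1 ≠ 0 := by positivity
  simp only [_root_.smul_apply, smul_eq_mul, add_sub_cancel_right]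
  field_simp

lemma pd_coord {x : E2} {i j : Fin 2} (c : ℝ) :
    pd i (fun x : E2 => x j - c) x = if j = i then 1 else 0 := by
  unfold pd
  have h : HasFDerivAt (fun x : E2 => x j - c) (EuclideanSpace.proj j : E2 →L[ℝ] ℝ) x :=
    (EuclideanSpace.proj j : E2 →L[ℝ] ℝ).hasFDerivAt.sub_const c
  rw [h.fderiv]
  simp

lemma pow_contDiffOn (Ω : Set E2) (f : E2 → ℝ) (hf : ContDiffOn ℝ 2 f Ω)
    (h0 : ∀ x ∈ Ω, 0 < f x) (s : ℝ) : ContDiffOn ℝ 1 (fun x => f x ^ (s + 1) / (s + 1)) Ω :=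
  ((hf.of_le (by norm_num)).rpow_const_of_ne (fun x hx => (h0 x hx).ne')).div_const _

lemma coord_contDiff (i : Fin 2) (c : ℝ) : ContDiff ℝ 1 (fun x : E2 => x i - c) :=
  ((EuclideanSpace.proj i : E2 →L[ℝ] ℝ).contDiff).sub contDiff_const

lemma poh_contDiffOn (Ω : Set E2) (hΩ : IsOpen Ω) (p q : ℝ) (u v : E2 → ℝ)
    (hu : ContDiffOn ℝ 2 u Ω) (hv : ContDiffOn ℝ 2 v Ω)
    (hupos : ∀ x ∈ Ω, 0 < u x) (hvpos : ∀ x ∈ Ω, 0 < v x) (y : E2) (i : Fin 2) :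
    ContDiffOn ℝ 1 (poh p q u v y i) Ω := by
  have hU := pd_contDiffOn Ω hΩ u hu
  have hV := pd_contDiffOn Ω hΩ v hv
  have hX : ∀ i, ContDiffOn ℝ 1 (fun x : E2 => x i - y i) Ω := fun i =>
    (coord_contDiff i (y i)).contDiffOn
  exact ((((hU i).mul (((hV 0).mul (hX 0)).add ((hV 1).mul (hX 1)))).add
    ((hV i).mul (((hU 0).mul (hX 0)).add ((hU 1).mul (hX 1))))).sub
    ((((hU 0).mul (hV 0)).add ((hU 1).mul (hV 1))).mul (hX i))).add
    ((hX i).mul ((pow_contDiffOn Ω v hv hvpos p).add (pow_contDiffOn Ω u hu hupos q)))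

lemma poh_div (Ω : Set E2) (hΩ : IsOpen Ω) (p q : ℝ) (hp : 0 < p) (hq : 0 < q) (u v : E2 → ℝ)
    (hu : ContDiffOn ℝ 2 u Ω) (hv : ContDiffOn ℝ 2 v Ω)
    (hupos : ∀ x ∈ Ω, 0 < u x) (hvpos : ∀ x ∈ Ω, 0 < v x)
    (heq1 : ∀ x ∈ Ω, - plap u x = v x ^ p)
    (heq2 : ∀ x ∈ Ω, - plap v x = u x ^ q) (y x : E2) (hx : x ∈ Ω) :
    pd 0 (poh p q u v y 0) x + pd 1 (poh p q u v y 1) x =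
      2 / (p + 1) * v x ^ (p + 1) + 2 / (q + 1) * u x ^ (q + 1) := by
  have hn := hΩ.mem_nhds hx
  have hU : ∀ i, DifferentiableAt ℝ (pd i u) x := fun i =>
    ((pd_contDiffOn Ω hΩ u hu i).contDiffAt hn).differentiableAt one_ne_zero
  have hV : ∀ i, DifferentiableAt ℝ (pd i v) x := fun i =>
    ((pd_contDiffOn Ω hΩ v hv i).contDiffAt hn).differentiableAt one_ne_zero
  have hX : ∀ i, DifferentiableAt ℝ (fun x : E2 => x i - y i) x := fun i =>
    (coord_contDiff i (y i)).differentiable one_ne_zero x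
  have hvp : DifferentiableAt ℝ (fun x => v x ^ (p + 1) / (p + 1)) x :=
    ((pow_contDiffOn Ω v hv hvpos p).contDiffAt hn).differentiableAt one_ne_zero
  have huq : DifferentiableAt ℝ (fun x => u x ^ (q + 1) / (q + 1)) x :=
    ((pow_contDiffOn Ω u hu hupos q).contDiffAt hn).differentiableAt one_ne_zero
  have hud : DifferentiableAt ℝ u x := (hu.contDiffAt hn).differentiableAt two_ne_zero
  have hvd : DifferentiableAt ℝ v x := (hv.contDiffAt hn).differentiableAt two_ne_zero
  have key : ∀ i, pd i (poh p q u v y i) x =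
      pd i u x * ((pd 0 v x * (if 0 = i then 1 else 0) + (x 0 - y 0) * pd i (pd 0 v) x) +
        (pd 1 v x * (if 1 = i then 1 else 0) + (x 1 - y 1) * pd i (pd 1 v) x)) +
      (pd 0 v x * (x 0 - y 0) + pd 1 v x * (x 1 - y 1)) * pd i (pd i u) x +
      (pd i v x * ((pd 0 u x * (if 0 = i then 1 else 0) + (x 0 - y 0) * pd i (pd 0 u) x) +
        (pd 1 u x * (if 1 = i then 1 else 0) + (x 1 - y 1) * pd i (pd 1 u) x)) +
      (pd 0 u x * (x 0 - y 0) + pd 1 u x * (x 1 - y 1)) * pd i (pd i v) x) -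
      ((pd 0 u x * pd 0 v x + pd 1 u x * pd 1 v x) * 1 +
        (x i - y i) * ((pd 0 u x * pd i (pd 0 v) x + pd 0 v x * pd i (pd 0 u) x) +
          (pd 1 u x * pd i (pd 1 v) x + pd 1 v x * pd i (pd 1 u) x))) +
      ((x i - y i) * (v x ^ p * pd i v x + u x ^ q * pd i u x) +
        (v x ^ (p + 1) / (p + 1) + u x ^ (q + 1) / (q + 1)) * 1) := by
    intro i
    unfold poh
    have A := ((hV 0).fun_mul (hX 0)).fun_add ((hV 1).fun_mul (hX 1))
    have B := ((hU 0).fun_mul (hX 0)).fun_add ((hU 1).fun_mul (hX 1))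
    have C := ((hU 0).fun_mul (hV 0)).fun_add ((hU 1).fun_mul (hV 1))
    have D := hvp.fun_add huq
    rw [pd_add ((((hU i).fun_mul A).fun_add ((hV i).fun_mul B)).fun_sub (C.fun_mul (hX i)))
      ((hX i).fun_mul D),
      pd_sub (((hU i).fun_mul A).fun_add ((hV i).fun_mul B)) (C.fun_mul (hX i)),
      pd_add ((hU i).fun_mul A) ((hV i).fun_mul B), pd_mul (hU i) A, pd_mul (hV i) B,
      pd_mul C (hX i), pd_mul (hX i) D, pd_add hvp huq, pd_pow p hp hvd (hvpos x hx),
      pd_pow q hq hud (hupos x hx), pd_add ((hV 0).fun_mul (hX 0)) ((hV 1).fun_mul (hX 1)),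
      pd_add ((hU 0).fun_mul (hX 0)) ((hU 1).fun_mul (hX 1)),
      pd_add ((hU 0).fun_mul (hV 0)) ((hU 1).fun_mul (hV 1)),
      pd_mul (hV 0) (hX 0), pd_mul (hV 1) (hX 1), pd_mul (hU 0) (hX 0), pd_mul (hU 1) (hX 1),
      pd_mul (hU 0) (hV 0), pd_mul (hU 1) (hV 1), pd_coord, pd_coord, pd_coord, if_pos (rfl : i = i)]
  have s1 := pd_symm Ω hΩ u hu x hx
  have s2 := pd_symm Ω hΩ v hv x hx
  have l1 : pd 0 (pd 0 u) x + pd 1 (pd 1 u) x = - v x ^ p := by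
    rw [← heq1 x hx, plap, Fin.sum_univ_two, neg_neg]; rfl
  have l2 : pd 0 (pd 0 v) x + pd 1 (pd 1 v) x = - u x ^ q := by
    rw [← heq2 x hx, plap, Fin.sum_univ_two, neg_neg]; rfl
  rw [key 0, key 1]
  simp only [if_true, one_ne_zero, zero_ne_one, if_false, s1, s2]
  linear_combination (pd 0 v x * (x 0 - y 0) + pd 1 v x * (x 1 - y 1)) * l1 +
    (pd 0 u x * (x 0 - y 0) + pd 1 u x * (x 1 - y 1)) * l2

theorem stmt0
    (Ω : Set E2) (hΩo : IsOpen Ω) (hΩb : Bornology.IsBounded Ω) (hΩne : Ω.Nonempty)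
    (p q : ℝ) (hp : 0 < p) (hq : 0 < q)
    (u v : E2 → ℝ)
    (huC2 : ContDiffOn ℝ 2 u Ω) (hvC2 : ContDiffOn ℝ 2 v Ω)
    (hupos : ∀ x ∈ Ω, 0 < u x) (hvpos : ∀ x ∈ Ω, 0 < v x)
    (heq1 : ∀ x ∈ Ω, - plap u x = v x ^ p)
    (heq2 : ∀ x ∈ Ω, - plap v x = u x ^ q)
    (z : E2) (d : ℝ) (hd : 0 < d) (hB : closedBall z d ⊆ Ω)
    (y : E2) :
    (2 / (p + 1)) * (∫ x in ball z d, v x ^ (p + 1)) +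
      (2 / (q + 1)) * (∫ x in ball z d, u x ^ (q + 1)) =
    (∫ x in sphere z d,
        (⟪gradient u x, d⁻¹ • (x - z)⟫ * ⟪gradient v x, x - y⟫ +
          ⟪gradient v x, d⁻¹ • (x - z)⟫ * ⟪gradient u x, x - y⟫) ∂μH[1]) -
      (∫ x in sphere z d, ⟪gradient u x, gradient v x⟫ * ⟪x - y, d⁻¹ • (x - z)⟫ ∂μH[1]) +
      (∫ x in sphere z d,
        ⟪x - y, d⁻¹ • (x - z)⟫ * (v x ^ (p + 1) / (p + 1) + u x ^ (q + 1) / (q + 1)) ∂μH[1]) := by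
  have hs : sphere z d ⊆ Ω := sphere_subset_closedBall.trans hB
  have hvp := pow_contDiffOn Ω v hvC2 hvpos p
  have huq := pow_contDiffOn Ω u huC2 hupos q
  have hU := fun i => (pd_contDiffOn Ω hΩo u huC2 i).continuousOn.mono hs
  have hV := fun i => (pd_contDiffOn Ω hΩo v hvC2 i).continuousOn.mono hs
  have hX : ∀ (w : E2) i, ContinuousOn (fun x : E2 => x i - w i) (sphere z d) := fun w i =>
    (coord_contDiff i (w i)).continuous.continuousOn
  have key := divergence_ball Ω hΩo z d hd hB (poh p q u v y 0) (poh p q u v y 1)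
    (poh_contDiffOn Ω hΩo p q u v huC2 hvC2 hupos hvpos y 0)
    (poh_contDiffOn Ω hΩo p q u v huC2 hvC2 hupos hvpos y 1)
  have hL : ∀ x ∈ ball z d, (fderiv ℝ (poh p q u v y 0) x (EuclideanSpace.single (0 : Fin 2) (1 : ℝ)) +
        fderiv ℝ (poh p q u v y 1) x (EuclideanSpace.single (1 : Fin 2) (1 : ℝ))) =
        2 / (p + 1) * v x ^ (p + 1) + 2 / (q + 1) * u x ^ (q + 1) := fun x hx =>
    poh_div Ω hΩo p q hp hq u v huC2 hvC2 hupos hvpos heq1 heq2 y x (hB (ball_subset_closedBall hx))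
  rw [setIntegral_congr_fun measurableSet_ball hL] at key
  have hiv : ∀ (s : ℝ) (f : E2 → ℝ), ContDiffOn ℝ 2 f Ω → (∀ x ∈ Ω, 0 < f x) →
      IntegrableOn (fun x => f x ^ (s + 1)) (ball z d) := by
    intro s f hf h0
    have : ContinuousOn (fun x => f x ^ (s + 1)) (closedBall z d) :=
      (hf.continuousOn.mono hB).rpow_const (fun x hx => Or.inl (h0 x (hB hx)).ne')
    exact (this.integrableOn_compact (isCompact_closedBall z d)).mono_set ball_subset_closedBall
  rw [← integral_const_mul, ← integral_const_mul,
    ← integral_add ((hiv p v hvC2 hvpos).const_mul _) ((hiv q u huC2 hupos).const_mul _), key]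
  have c1 : ContinuousOn (fun x => ⟪gradient u x, d⁻¹ • (x - z)⟫ * ⟪gradient v x, x - y⟫ +
          ⟪gradient v x, d⁻¹ • (x - z)⟫ * ⟪gradient u x, x - y⟫) (sphere z d) := by
    simp only [inner_grad, PiLp.smul_apply, PiLp.sub_apply, smul_eq_mul]
    have a0 := hU 0
    have a1 := hU 1
    have a2 := hV 0
    have a3 := hV 1
    have a4 := hX z 0
    have a5 := hX z 1
    have a6 := hX y 0
    have a7 := hX y 1
    fun_prop
  have c2 : ContinuousOn (fun x => ⟪gradient u x, gradient v x⟫ * ⟪x - y, d⁻¹ • (x - z)⟫)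
      (sphere z d) := by
    simp only [inner_E2 (gradient u _), grad_coord]
    have a0 := hU 0
    have a1 := hU 1
    have a2 := hV 0
    have a3 := hV 1
    fun_prop
  have c3 : ContinuousOn (fun x => ⟪x - y, d⁻¹ • (x - z)⟫ *
      (v x ^ (p + 1) / (p + 1) + u x ^ (q + 1) / (q + 1))) (sphere z d) := by
    refine ContinuousOn.mul (by fun_prop) ?_
    exact (hvp.continuousOn.mono hs).add (huq.continuousOn.mono hs)
  have i1 := sphere_integrable z d hd _ c1
  have i2 := sphere_integrable z d hd _ c2
  have i3 := sphere_integrable z d hd _ c3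
  rw [← integral_sub i1 i2]
  refine Eq.trans ?_ (integral_add (i1.sub i2) i3)
  congr 1
  ext x
  simp only [Pi.sub_apply, inner_E2 (gradient u _) (gradient v _), inner_grad, grad_coord, inner_E2 (_ - _),
    PiLp.smul_apply, PiLp.sub_apply, smul_eq_mul, poh]
  ring
end
end

section
/- Let (u,v) be as in the context and let B = B_d(z) be an open ball whose closure is contained in Ω. Then for i = 1, 2: −∫_{∂B} [⟨∇u(x),ν(x)⟩ ∂_i v(x) + ⟨∇v(x),ν(x)⟩ ∂_i u(x)] dσ(x) + ∫_{∂B} ⟨∇u(x),∇v(x)⟩ ν_i(x) dσ(x) = ∫_{∂B} (v(x)^{p+1}/(p+1) + u(x)^{q+1}/(q+1)) ν_i(x) dσ(x). -/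
open MeasureTheory Filter Metric Real
open scoped Topology ENNReal NNReal RealInnerProductSpace

noncomputable section

abbrev b2 (j : Fin 2) : E2 := EuclideanSpace.single j 1

def Jr (w : E2) : E2 := !₂[-w 1, w 0]

def rotv (w : E2) (t : ℝ) : E2 := cos t • w + sin t • Jr w

lemma rotv_zero_coord (w : E2) (t : ℝ) : rotv w t 0 = cos t * w 0 - sin t * w 1 := by
  simp [rotv, Jr]; ring

lemma rotv_one_coord (w : E2) (t : ℝ) : rotv w t 1 = cos t * w 1 + sin t * w 0 := by
  simp [rotv, Jr]

lemma norm_rotv (w : E2) (t : ℝ) : ‖rotv w t‖ = ‖w‖ := by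
  rw [EuclideanSpace.norm_eq, EuclideanSpace.norm_eq]
  congr 1
  simp only [Fin.sum_univ_two, rotv_zero_coord, rotv_one_coord, Real.norm_eq_abs, sq_abs]
  linear_combination (w 0 ^ 2 + w 1 ^ 2) * (sin_sq_add_cos_sq t)

lemma rotv_sub (w w' : E2) (t : ℝ) : rotv w t - rotv w' t = rotv (w - w') t := by
  ext j; fin_cases j <;> simp [rotv_zero_coord, rotv_one_coord] <;> ring

lemma rotv_neg (w : E2) (t : ℝ) : rotv (rotv w t) (-t) = w := by
  ext j; fin_cases j
  · simp [rotv_zero_coord, rotv_one_coord]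
    linear_combination (w 0) * (sin_sq_add_cos_sq t)
  · simp [rotv_zero_coord, rotv_one_coord]
    linear_combination (w 1) * (sin_sq_add_cos_sq t)

lemma continuous_Jr : Continuous Jr := by
  unfold Jr; fun_prop

lemma hasDerivAt_rotv (w : E2) (t : ℝ) :
    HasDerivAt (rotv w) (Jr (rotv w t)) t := by
  have h := ((hasDerivAt_cos t).smul_const w).add ((hasDerivAt_sin t).smul_const (Jr w))
  refine h.congr_deriv ?_
  ext j; fin_cases j <;> simp [rotv, Jr, add_comm]

lemma vec_eq (w : E2) : w = w 0 • b2 0 + w 1 • b2 1 := by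
  ext j; fin_cases j <;> simp [b2]

lemma clm_eq (L : E2 →L[ℝ] ℝ) (w : E2) : L w = w 0 * L (b2 0) + w 1 * L (b2 1) := by
  conv_lhs => rw [vec_eq w]
  simp

/-- rotation about `z` as an isometry. -/
def rotI (z : E2) (t : ℝ) : E2 ≃ᵢ E2 where
  toFun x := z + rotv (x - z) t
  invFun x := z + rotv (x - z) (-t)
  left_inv x := by simp [rotv_neg]
  right_inv x := by
    have := rotv_neg (x - z) (-t)
    simp only [neg_neg] at this
    simp [this]
  isometry_toFun := by
    apply Isometry.of_dist_eq
    intro x y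
    rw [dist_eq_norm, dist_eq_norm, add_sub_add_left_eq_sub, rotv_sub, norm_rotv]
    congr 1; abel

lemma rotI_apply (z : E2) (t : ℝ) (x : E2) : rotI z t x = z + rotv (x - z) t := rfl

lemma sphere_finite (z : E2) (d : ℝ) : (μH[1] : Measure E2) (sphere z d) < ∞ := by
  have hsub : sphere z d ⊆ (fun t => z + rotv (d • b2 0) t) '' Set.Icc (-π) π := by
    intro x hx
    have hx' : ‖x - z‖ = d := by simpa [dist_eq_norm] using hx
    set c : ℂ := ⟨(x - z) 0, (x - z) 1⟩ with hc
    have hn : ‖c‖ = d := by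
      rw [← hx', EuclideanSpace.norm_eq, Complex.norm_def, Complex.normSq_apply]
      simp [Fin.sum_univ_two, hc, sq]
    refine ⟨c.arg, ⟨(Complex.neg_pi_lt_arg c).le, Complex.arg_le_pi c⟩, ?_⟩
    have h1 := Complex.norm_mul_cos_arg c
    have h2 := Complex.norm_mul_sin_arg c
    rw [hn] at h1 h2
    have h3 : c.re = x 0 - z 0 := by simp [hc]
    have h4 : c.im = x 1 - z 1 := by simp [hc]
    rw [h3] at h1
    rw [h4] at h2
    ext j; fin_cases j
    · simp [rotv_zero_coord, b2]; linarith
    · simp [rotv_one_coord, b2]; linarith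
  have hlip : LipschitzOnWith (Real.toNNReal |d|) (fun t => z + rotv (d • b2 0) t)
      (Set.Icc (-π) π) := by
    apply Convex.lipschitzOnWith_of_nnnorm_hasDerivWithin_le (f' := fun t => Jr (rotv (d • b2 0) t))
      (convex_Icc _ _)
    · intro t _
      exact ((hasDerivAt_rotv _ t).const_add z).hasDerivWithinAt
    · intro t _
      rw [← NNReal.coe_le_coe, Real.coe_toNNReal _ (abs_nonneg d), coe_nnnorm]
      have hJ : ∀ w : E2, ‖Jr w‖ = ‖w‖ := by
        intro w
        rw [EuclideanSpace.norm_eq, EuclideanSpace.norm_eq]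
        simp [Jr, Fin.sum_univ_two, add_comm]
      rw [hJ, norm_rotv, norm_smul]
      simp [b2]
  refine (measure_mono hsub).trans_lt ((hlip.hausdorffMeasure_image_le zero_le_one).trans_lt ?_)
  rw [hausdorffMeasure_real]
  apply ENNReal.mul_lt_top
  · simp
  · simp

lemma circ_flux (Ω : Set E2) (hΩ : IsOpen Ω) (F0 F1 : E2 → ℝ)
    (h0 : DifferentiableOn ℝ F0 Ω) (h1 : DifferentiableOn ℝ F1 Ω)
    (hdiv : ∀ x ∈ Ω, fderiv ℝ F0 x (b2 0) + fderiv ℝ F1 x (b2 1) = 0)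
    (z : E2) (d : ℝ) (hB : closedBall z d ⊆ Ω) (w : E2) (hw : ‖w‖ = d) :
    ∫ t in (0:ℝ)..(2 * π), (F0 (z + rotv w t) * rotv w t 0 + F1 (z + rotv w t) * rotv w t 1) = 0 := by
  set G : ℝ × ℝ → E2 := fun y => z + y.1 • rotv w y.2 with hG
  set P : ℝ × ℝ → ℝ := fun y => y.1 * (F0 (G y) * rotv w y.2 0 + F1 (G y) * rotv w y.2 1) with hP
  set Q : ℝ × ℝ → ℝ := fun y => - F0 (G y) * rotv w y.2 1 + F1 (G y) * rotv w y.2 0 with hQ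
  have hrot : Differentiable ℝ (rotv w) := fun t => (hasDerivAt_rotv w t).differentiableAt
  have hGd : Differentiable ℝ G := by
    have : Differentiable ℝ (fun y : ℝ × ℝ => rotv w y.2) := hrot.comp differentiable_snd
    exact (differentiable_fst.smul this).const_add z
  have hr0 : Differentiable ℝ (fun y : ℝ × ℝ => rotv w y.2 0) := by
    simp only [rotv_zero_coord]; fun_prop
  have hr1 : Differentiable ℝ (fun y : ℝ × ℝ => rotv w y.2 1) := by
    simp only [rotv_one_coord]; fun_prop
  have hmem : ∀ y ∈ Set.uIcc (0:ℝ) 1 ×ˢ Set.uIcc (0:ℝ) (2 * π), G y ∈ Ω := by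
    rintro ⟨r, t⟩ ⟨hr, -⟩
    rw [Set.uIcc_of_le zero_le_one] at hr
    apply hB
    simp only [hG, mem_closedBall, dist_eq_norm, add_sub_cancel_left, norm_smul, norm_rotv, hw,
      Real.norm_eq_abs, abs_of_nonneg hr.1]
    have : 0 ≤ d := hw ▸ norm_nonneg w
    nlinarith [hr.2]
  have hd0 : ∀ y, G y ∈ Ω → DifferentiableAt ℝ (fun y => F0 (G y)) y := fun y hy =>
    (h0.differentiableAt (hΩ.mem_nhds hy)).comp y (hGd y)
  have hd1 : ∀ y, G y ∈ Ω → DifferentiableAt ℝ (fun y => F1 (G y)) y := fun y hy =>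
    (h1.differentiableAt (hΩ.mem_nhds hy)).comp y (hGd y)
  have hPd : ∀ y, G y ∈ Ω → DifferentiableAt ℝ P y := fun y hy =>
    differentiableAt_fst.mul (((hd0 y hy).mul (hr0 y)).add ((hd1 y hy).mul (hr1 y)))
  have hQd : ∀ y, G y ∈ Ω → DifferentiableAt ℝ Q y := fun y hy =>
    ((hd0 y hy).neg.mul (hr1 y)).add ((hd1 y hy).mul (hr0 y))
  have hsum : ∀ y, G y ∈ Ω → fderiv ℝ P y (1, 0) + fderiv ℝ Q y (0, 1) = 0 := by
    rintro ⟨r, t⟩ hy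
    have hf0 := (h0.differentiableAt (hΩ.mem_nhds hy)).hasFDerivAt
    have hf1 := (h1.differentiableAt (hΩ.mem_nhds hy)).hasFDerivAt
    have g1 : HasDerivAt (fun s => G (s, t)) (rotv w t) r := by
      exact (((hasDerivAt_id r).smul_const (rotv w t)).const_add z).congr_deriv (one_smul _ _)
    have g2 : HasDerivAt (fun s => G (r, s)) (r • Jr (rotv w t)) t :=
      ((hasDerivAt_rotv w t).const_smul r).const_add z
    have e0 : HasDerivAt (fun s => rotv w s 0) (- rotv w t 1) t := by
      simp only [rotv_zero_coord, rotv_one_coord]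
      refine (((hasDerivAt_cos t).mul_const (w 0)).sub ((hasDerivAt_sin t).mul_const (w 1))).congr_deriv ?_
      ring
    have e1 : HasDerivAt (fun s => rotv w s 1) (rotv w t 0) t := by
      simp only [rotv_zero_coord, rotv_one_coord]
      refine (((hasDerivAt_cos t).mul_const (w 1)).add ((hasDerivAt_sin t).mul_const (w 0))).congr_deriv ?_
      ring
    have P1 := (hasDerivAt_id r).mul (((hf0.comp_hasDerivAt r g1).mul_const (rotv w t 0)).add
      ((hf1.comp_hasDerivAt r g1).mul_const (rotv w t 1)))
    have Q1 := ((hf0.comp_hasDerivAt t g2).neg.mul e1).add ((hf1.comp_hasDerivAt t g2).mul e0)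
    have i1 : HasDerivAt (fun s : ℝ => (s, t)) ((1 : ℝ), (0 : ℝ)) r :=
      (hasDerivAt_id r).prodMk (hasDerivAt_const r t)
    have i2 : HasDerivAt (fun s : ℝ => (r, s)) ((0 : ℝ), (1 : ℝ)) t :=
      (hasDerivAt_const t r).prodMk (hasDerivAt_id t)
    have P2 := (hPd (r, t) hy).hasFDerivAt.comp_hasDerivAt r i1
    have Q2 := (hQd (r, t) hy).hasFDerivAt.comp_hasDerivAt t i2
    rw [P2.unique P1, Q2.unique Q1]
    have hdv := hdiv _ hy
    rw [clm_eq _ (rotv w t), clm_eq _ (r • Jr (rotv w t)),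
      clm_eq (fderiv ℝ F1 _) (rotv w t), clm_eq (fderiv ℝ F1 _) (r • Jr (rotv w t))]
    simp [Jr]
    linear_combination r * (rotv w t 0 ^ 2 + rotv w t 1 ^ 2) * hdv
  have hsub : Set.Ioo (min 0 1) (max 0 1) ×ˢ Set.Ioo (min 0 (2 * π)) (max 0 (2 * π)) ⊆
      Set.uIcc (0:ℝ) 1 ×ˢ Set.uIcc (0:ℝ) (2 * π) :=
    Set.prod_mono Set.Ioo_subset_Icc_self Set.Ioo_subset_Icc_self
  have key := integral2_divergence_prod_of_hasFDerivAt_off_countable P Q (fderiv ℝ P) (fderiv ℝ Q)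
    0 0 1 (2 * π) ∅ Set.countable_empty
    (fun y hy => (hPd y (hmem y hy)).continuousAt.continuousWithinAt)
    (fun y hy => (hQd y (hmem y hy)).continuousAt.continuousWithinAt)
    (fun y hy => (hPd y (hmem y (hsub hy.1))).hasFDerivAt)
    (fun y hy => (hQd y (hmem y (hsub hy.1))).hasFDerivAt)
    ((integrableOn_congr_fun (g := fun _ => (0:ℝ)) (fun y hy => hsum y (hmem y hy))
      (measurableSet_uIcc.prod measurableSet_uIcc)).2 integrableOn_zero)
  have hz : (∫ x in (0:ℝ)..1, ∫ y in (0:ℝ)..(2 * π),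
      fderiv ℝ P (x, y) (1, 0) + fderiv ℝ Q (x, y) (0, 1)) = 0 := by
    rw [intervalIntegral.integral_congr (g := fun _ => (0:ℝ))]
    · simp
    · intro x hx
      simp only
      rw [intervalIntegral.integral_congr (g := fun _ => (0:ℝ))]
      · simp
      · intro y hy
        exact hsum (x, y) (hmem (x, y) ⟨hx, hy⟩)
  rw [hz] at key
  have hper : ∀ x, Q (x, 2 * π) = Q (x, 0) := by
    intro x; simp [hQ, hG, rotv]
  simp only [hper, sub_self, zero_add] at key
  simpa [hP, hG] using key.symm

lemma sphere_flux (Ω : Set E2) (hΩ : IsOpen Ω) (F0 F1 : E2 → ℝ)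
    (h0 : DifferentiableOn ℝ F0 Ω) (h1 : DifferentiableOn ℝ F1 Ω)
    (hdiv : ∀ x ∈ Ω, fderiv ℝ F0 x (b2 0) + fderiv ℝ F1 x (b2 1) = 0)
    (z : E2) (d : ℝ) (hB : closedBall z d ⊆ Ω) :
    ∫ x in sphere z d, (F0 x * (x 0 - z 0) + F1 x * (x 1 - z 1)) ∂μH[1] = 0 := by
  set g : E2 → ℝ := fun x => F0 x * (x 0 - z 0) + F1 x * (x 1 - z 1) with hg
  have hgc : ContinuousOn g (sphere z d) := by
    have c0 := h0.continuousOn.mono (sphere_subset_closedBall.trans hB)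
    have c1 := h1.continuousOn.mono (sphere_subset_closedBall.trans hB)
    fun_prop
  set ν : Measure E2 := (μH[1]).restrict (sphere z d) with hν
  have : IsFiniteMeasure ν := ⟨by simpa [hν] using sphere_finite z d⟩
  have hpre : ∀ t, rotI z t ⁻¹' sphere z d = sphere z d := by
    intro t; ext x
    rw [Set.mem_preimage, mem_sphere, mem_sphere, rotI_apply, dist_eq_norm, dist_eq_norm,
      add_sub_cancel_left, norm_rotv]
  have hinv : ∀ t, ∫ x, g (rotI z t x) ∂ν = ∫ x, g x ∂ν := by
    intro t
    have := ((rotI z t).measurePreserving_hausdorffMeasure 1).setIntegral_preimage_emb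
      (rotI z t).toHomeomorph.measurableEmbedding g (sphere z d)
    rwa [hpre] at this
  have hcont : Continuous (fun y : E2 × ℝ => rotI z y.2 y.1) := by
    simp only [rotI_apply, rotv]
    have := continuous_Jr
    fun_prop
  have hint : Integrable (Function.uncurry fun (x : E2) (t : ℝ) => g (rotI z t x))
      (ν.prod (volume.restrict (Set.Icc 0 (2 * π)))) := by
    have hco : ContinuousOn (Function.uncurry fun (x : E2) (t : ℝ) => g (rotI z t x))
        (sphere z d ×ˢ Set.Icc 0 (2 * π)) := by
      apply hgc.comp hcont.continuousOn
      rintro ⟨x, t⟩ ⟨hx, -⟩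
      have : x ∈ rotI z t ⁻¹' sphere z d := by rw [hpre]; exact hx
      exact this
    have hK := hco.integrableOn_compact (μ := ν.prod (volume.restrict (Set.Icc 0 (2 * π))))
      ((isCompact_sphere z d).prod isCompact_Icc)
    rw [IntegrableOn, ← Measure.prod_restrict, hν, Measure.restrict_restrict_of_subset subset_rfl,
      Measure.restrict_restrict_of_subset subset_rfl] at hK
    exact hK
  have hsw := integral_integral_swap hint
  have hL : ∫ x, (∫ t in Set.Icc (0:ℝ) (2 * π), g (rotI z t x)) ∂ν = 0 := by
    apply (setIntegral_congr_fun (g := fun _ => (0:ℝ)) isClosed_sphere.measurableSet _).trans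
    · simp
    intro x hx
    have hx' : ‖x - z‖ = d := by simpa [dist_eq_norm] using hx
    have := circ_flux Ω hΩ F0 F1 h0 h1 hdiv z d hB (x - z) hx'
    rw [intervalIntegral.integral_of_le (by positivity), ← integral_Icc_eq_integral_Ioc] at this
    simpa [hg, rotI_apply] using this
  rw [hL] at hsw
  simp only [hinv] at hsw
  simp at hsw
  rcases hsw with h | h
  · exact absurd h (not_le.2 (by positivity))
  · exact h

lemma fd_comp (Ω : Set E2) (hΩ : IsOpen Ω) (u : E2 → ℝ) (hu : ContDiffOn ℝ 2 u Ω) (x : E2)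
    (hx : x ∈ Ω) (j : Fin 2) :
    HasFDerivAt (fun y => fderiv ℝ u y (b2 j)) (fderiv ℝ (fun y => fderiv ℝ u y (b2 j)) x) x := by
  have h := (hu.fderiv_of_isOpen (m := 1) hΩ (by norm_num)).differentiableOn (by norm_num)
  have h2 := h.differentiableAt (hΩ.mem_nhds hx)
  exact (h2.clm_apply (differentiableAt_const _)).hasFDerivAt

lemma fd_symm (Ω : Set E2) (hΩ : IsOpen Ω) (u : E2 → ℝ) (hu : ContDiffOn ℝ 2 u Ω) (x : E2)
    (hx : x ∈ Ω) (j k : Fin 2) :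
    fderiv ℝ (fun y => fderiv ℝ u y (b2 j)) x (b2 k) =
      fderiv ℝ (fun y => fderiv ℝ u y (b2 k)) x (b2 j) := by
  have h := (hu.fderiv_of_isOpen (m := 1) hΩ (by norm_num)).differentiableOn (by norm_num)
  have h2 := h.differentiableAt (hΩ.mem_nhds hx)
  have hs : IsSymmSndFDerivAt ℝ u x := (hu.contDiffAt (hΩ.mem_nhds hx)).isSymmSndFDerivAt (by simp)
  have e : ∀ j k, fderiv ℝ (fun y => fderiv ℝ u y (b2 j)) x (b2 k) =
      fderiv ℝ (fderiv ℝ u) x (b2 k) (b2 j) := by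
    intro j k
    rw [fderiv_clm_apply h2 (differentiableAt_const _)]
    simp
  rw [e, e]
  exact hs _ _

theorem stmt1
    (Ω : Set E2) (hΩo : IsOpen Ω) (hΩb : Bornology.IsBounded Ω) (hΩne : Ω.Nonempty)
    (p q : ℝ) (hp : 0 < p) (hq : 0 < q)
    (u v : E2 → ℝ)
    (huC2 : ContDiffOn ℝ 2 u Ω) (hvC2 : ContDiffOn ℝ 2 v Ω)
    (hupos : ∀ x ∈ Ω, 0 < u x) (hvpos : ∀ x ∈ Ω, 0 < v x)
    (heq1 : ∀ x ∈ Ω, - plap u x = v x ^ p)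
    (heq2 : ∀ x ∈ Ω, - plap v x = u x ^ q)
    (z : E2) (d : ℝ) (hd : 0 < d) (hB : closedBall z d ⊆ Ω)
    (i : Fin 2) :
    -(∫ x in sphere z d,
        (⟪gradient u x, d⁻¹ • (x - z)⟫ * fderiv ℝ v x (EuclideanSpace.single i 1) +
          ⟪gradient v x, d⁻¹ • (x - z)⟫ * fderiv ℝ u x (EuclideanSpace.single i 1)) ∂μH[1]) +
      (∫ x in sphere z d, ⟪gradient u x, gradient v x⟫ * (d⁻¹ * (x i - z i)) ∂μH[1]) =
    ∫ x in sphere z d,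
      (v x ^ (p + 1) / (p + 1) + u x ^ (q + 1) / (q + 1)) * (d⁻¹ * (x i - z i)) ∂μH[1] := by
  have hdu : ∀ x ∈ Ω, HasFDerivAt u (fderiv ℝ u x) x := fun x hx =>
    ((huC2.differentiableOn (by norm_num)).differentiableAt (hΩo.mem_nhds hx)).hasFDerivAt
  have hdv : ∀ x ∈ Ω, HasFDerivAt v (fderiv ℝ v x) x := fun x hx =>
    ((hvC2.differentiableOn (by norm_num)).differentiableAt (hΩo.mem_nhds hx)).hasFDerivAt
  set c : Fin 2 → ℝ := fun j => if j = i then 1 else 0 with hc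
  set U : Fin 2 → E2 → ℝ := fun j x => fderiv ℝ u x (b2 j) with hU
  set V : Fin 2 → E2 → ℝ := fun j x => fderiv ℝ v x (b2 j) with hV
  set H : E2 → ℝ := fun x => v x ^ (p + 1) / (p + 1) + u x ^ (q + 1) / (q + 1) with hH
  set W : E2 → ℝ := fun x => U 0 x * V 0 x + U 1 x * V 1 x with hW
  set F : Fin 2 → E2 → ℝ := fun j x => -(U j x * V i x + V j x * U i x) + c j * (W x - H x) with hF
  have hUd : ∀ x ∈ Ω, ∀ j, HasFDerivAt (U j) (fderiv ℝ (U j) x) x := fun x hx j =>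
    fd_comp Ω hΩo u huC2 x hx j
  have hVd : ∀ x ∈ Ω, ∀ j, HasFDerivAt (V j) (fderiv ℝ (V j) x) x := fun x hx j =>
    fd_comp Ω hΩo v hvC2 x hx j
  have hHd : ∀ x ∈ Ω, HasFDerivAt H (v x ^ p • fderiv ℝ v x + u x ^ q • fderiv ℝ u x) x := by
    intro x hx
    have h1 := ((hdv x hx).rpow_const (p := p + 1) (Or.inl (hvpos x hx).ne')).mul_const (p + 1)⁻¹
    have h2 := ((hdu x hx).rpow_const (p := q + 1) (Or.inl (hupos x hx).ne')).mul_const (q + 1)⁻¹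
    have h3 := h1.add h2
    have hp1 : p + 1 ≠ 0 := by positivity
    have hq1 : q + 1 ≠ 0 := by positivity
    refine (h3.congr_fderiv ?_)
    rw [smul_smul, smul_smul, add_sub_cancel_right, add_sub_cancel_right, ← mul_assoc, ← mul_assoc,
      inv_mul_cancel₀ hp1, inv_mul_cancel₀ hq1, one_mul, one_mul]
  have hWd : ∀ x ∈ Ω, HasFDerivAt W ((U 0 x • fderiv ℝ (V 0) x + V 0 x • fderiv ℝ (U 0) x) +
      (U 1 x • fderiv ℝ (V 1) x + V 1 x • fderiv ℝ (U 1) x)) x := fun x hx =>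
    ((hUd x hx 0).mul (hVd x hx 0)).add ((hUd x hx 1).mul (hVd x hx 1))
  have hFd : ∀ x ∈ Ω, ∀ j, HasFDerivAt (F j) (-((U j x • fderiv ℝ (V i) x + V i x • fderiv ℝ (U j) x)
      + (V j x • fderiv ℝ (U i) x + U i x • fderiv ℝ (V j) x)) +
      c j • (((U 0 x • fderiv ℝ (V 0) x + V 0 x • fderiv ℝ (U 0) x) +
      (U 1 x • fderiv ℝ (V 1) x + V 1 x • fderiv ℝ (U 1) x)) -
        (v x ^ p • fderiv ℝ v x + u x ^ q • fderiv ℝ u x))) x := fun x hx j =>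
    (((hUd x hx j).mul (hVd x hx i)).add ((hVd x hx j).mul (hUd x hx i))).neg.add
      (((hWd x hx).sub (hHd x hx)).const_mul (c j))
  have hdiv : ∀ x ∈ Ω, fderiv ℝ (F 0) x (b2 0) + fderiv ℝ (F 1) x (b2 1) = 0 := by
    intro x hx
    rw [(hFd x hx 0).fderiv, (hFd x hx 1).fderiv]
    have e1 : -(fderiv ℝ (U 0) x (b2 0) + fderiv ℝ (U 1) x (b2 1)) = v x ^ p := by
      rw [← heq1 x hx, plap, Fin.sum_univ_two]
    have e2 : -(fderiv ℝ (V 0) x (b2 0) + fderiv ℝ (V 1) x (b2 1)) = u x ^ q := by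
      rw [← heq2 x hx, plap, Fin.sum_univ_two]
    have s1 : fderiv ℝ (U 0) x (b2 1) = fderiv ℝ (U 1) x (b2 0) := fd_symm Ω hΩo u huC2 x hx 0 1
    have s2 : fderiv ℝ (V 0) x (b2 1) = fderiv ℝ (V 1) x (b2 0) := fd_symm Ω hΩo v hvC2 x hx 0 1
    have d1 : ∀ j, fderiv ℝ u x (b2 j) = U j x := fun j => rfl
    have d2 : ∀ j, fderiv ℝ v x (b2 j) = V j x := fun j => rfl
    simp only [_root_.add_apply, _root_.sub_apply,
      _root_.neg_apply, _root_.smul_apply, smul_eq_mul, d1, d2, ← e1, ← e2]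
    clear_value U V
    have hi : i = 0 ∨ i = 1 := by fin_cases i <;> simp
    rcases hi with rfl | rfl
    · simp only [hc, s1, s2]; simp; ring
    · simp only [hc, s1, s2]; simp; ring
  have hflux := sphere_flux Ω hΩo (F 0) (F 1)
    (fun x hx => (hFd x hx 0).differentiableAt.differentiableWithinAt)
    (fun x hx => (hFd x hx 1).differentiableAt.differentiableWithinAt) hdiv z d hB
  have hsub : sphere z d ⊆ Ω := sphere_subset_closedBall.trans hB
  have hUc : ∀ j, ContinuousOn (U j) (sphere z d) := fun j x hx =>
    (hUd x (hsub hx) j).continuousAt.continuousWithinAt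
  have hVc : ∀ j, ContinuousOn (V j) (sphere z d) := fun j x hx =>
    (hVd x (hsub hx) j).continuousAt.continuousWithinAt
  have hHc : ContinuousOn H (sphere z d) := fun x hx =>
    (hHd x (hsub hx)).continuousAt.continuousWithinAt
  have hWc : ContinuousOn W (sphere z d) := fun x hx =>
    (hWd x (hsub hx)).continuousAt.continuousWithinAt
  have hint : ∀ g : E2 → ℝ, ContinuousOn g (sphere z d) → IntegrableOn g (sphere z d) μH[1] := by
    intro g hg
    have : IsFiniteMeasure ((μH[1] : Measure E2).restrict (sphere z d)) :=
      ⟨by simpa using sphere_finite z d⟩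
    have h := hg.integrableOn_compact (μ := (μH[1] : Measure E2).restrict (sphere z d))
      (isCompact_sphere z d)
    rwa [IntegrableOn, Measure.restrict_restrict_of_subset subset_rfl] at h
  have hgu : ∀ x, ⟪gradient u x, d⁻¹ • (x - z)⟫ =
      d⁻¹ * ((x 0 - z 0) * U 0 x + (x 1 - z 1) * U 1 x) := by
    intro x
    rw [inner_gradient_left, map_smul, clm_eq]; rfl
  have hgv : ∀ x, ⟪gradient v x, d⁻¹ • (x - z)⟫ =
      d⁻¹ * ((x 0 - z 0) * V 0 x + (x 1 - z 1) * V 1 x) := by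
    intro x
    rw [inner_gradient_left, map_smul, clm_eq]; rfl
  have hgr : ∀ (x : E2) (j : Fin 2), gradient v x j = V j x := by
    intro x j
    have : ⟪gradient v x, b2 j⟫ = V j x := inner_gradient_left
    rw [← this]
    rw [EuclideanSpace.inner_single_right]; simp
  have hguv : ∀ x, ⟪gradient u x, gradient v x⟫ = W x := by
    intro x
    rw [inner_gradient_left, clm_eq, hgr, hgr]
    simp only [hW, hU]; ring
  have hVi : ∀ x, fderiv ℝ v x (EuclideanSpace.single i 1) = V i x := fun x => rfl
  have hUi : ∀ x, fderiv ℝ u x (EuclideanSpace.single i 1) = U i x := fun x => rfl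
  have hHx : ∀ x, v x ^ (p + 1) / (p + 1) + u x ^ (q + 1) / (q + 1) = H x := fun x => rfl
  simp only [hgu, hgv, hguv, hVi, hUi, hHx]
  have hU0 := hUc 0
  have hU1 := hUc 1
  have hV0 := hVc 0
  have hV1 := hVc 1
  have hUi' := hUc i
  have hVi' := hVc i
  clear_value U V H W
  rw [← sub_eq_zero, ← integral_neg, ← integral_add, ← integral_sub]
  · have := congrArg (fun r => d⁻¹ * r) hflux
    simp only [mul_zero] at this
    rw [← integral_const_mul] at this
    rw [← this]
    congr 1
    ext x
    have hi : i = 0 ∨ i = 1 := by fin_cases i <;> simp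
    rcases hi with rfl | rfl
    · simp [hF, hc]; ring
    · simp [hF, hc]; ring
  · apply hint; fun_prop
  · apply hint; fun_prop
  · apply hint; fun_prop
  · apply hint; fun_prop
end
end
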